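/- Let f : ℝ → ℝ be infinitely differentiable on a neighborhood of 0 with f(0) > 0, and suppose all derivatives of g = log ∘ f at 0 are nonnegative (f is log-absolutely monotonic at 0). Then for any fixed real q ≥ 0, all derivatives of the function x ↦ f(x)^q at 0 are nonnegative. -/

import Mathlib

/-!
Near a point where `f` is positive, `f ^ q = exp ∘ (q * log f)`. Every derivative of a composition
`φ ∘ g` is a polynomial with natural number coefficients in the derivatives of `φ`, evaluated at the
value of `g`, and in the derivatives of `g` of positive order; for `φ = exp` the former are all
positive. Faà di Bruno's formula is not needed to see this: it follows by strong induction, over all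
`φ` at once, from `(φ ∘ g)' = (φ' ∘ g) * g'` and the Leibniz rule.
-/

open Filter Topology

section Nonneg

variable {𝕜 : Type*} [NontriviallyNormedField 𝕜] {x : 𝕜} {n : ℕ}

theorem iteratedDeriv_mul_nonneg {𝔸 : Type*} [NormedRing 𝔸] [NormedAlgebra 𝕜 𝔸] [PartialOrder 𝔸]
    [IsOrderedRing 𝔸] {f g : 𝕜 → 𝔸} (hf : ContDiffAt 𝕜 n f x) (hg : ContDiffAt 𝕜 n g x)
    (hf_nonneg : ∀ k ≤ n, 0 ≤ iteratedDeriv k f x)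
    (hg_nonneg : ∀ k ≤ n, 0 ≤ iteratedDeriv k g x) : 0 ≤ iteratedDeriv n (f * g) x := by
  rw [iteratedDeriv_mul hf hg]
  exact Finset.sum_nonneg fun k hk ↦ mul_nonneg
    (mul_nonneg (Nat.cast_nonneg _) (hf_nonneg k (Finset.mem_range_succ_iff.mp hk)))
    (hg_nonneg (n - k) (n.sub_le k))

variable {𝕜' : Type*} [NontriviallyNormedField 𝕜'] [NormedAlgebra 𝕜 𝕜'] {φ : 𝕜' → 𝕜'} {g : 𝕜 → 𝕜'}

theorem deriv_comp_eventuallyEq (hφ : ∀ᶠ z in 𝓝 (g x), DifferentiableAt 𝕜' φ z)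
    (hg : ∀ᶠ y in 𝓝 x, DifferentiableAt 𝕜 g y) :
    deriv (φ ∘ g) =ᶠ[𝓝 x] (deriv φ ∘ g) * deriv g := by
  filter_upwards [hg.self_of_nhds.continuousAt.eventually hφ, hg] with y hφy hgy
  exact deriv_comp y hφy hgy

theorem iteratedDeriv_comp_nonneg [PartialOrder 𝕜'] [IsOrderedRing 𝕜']
    (hφ : ContDiffAt 𝕜' n φ (g x)) (hg : ContDiffAt 𝕜 n g x)
    (hφ_nonneg : ∀ k ≤ n, 0 ≤ iteratedDeriv k φ (g x))
    (hg_nonneg : ∀ k, 1 ≤ k → k ≤ n → 0 ≤ iteratedDeriv k g x) :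
    0 ≤ iteratedDeriv n (φ ∘ g) x := by
  induction n using Nat.strong_induction_on generalizing φ with
  | h n ih =>
    cases n with
    | zero => simpa using hφ_nonneg 0 le_rfl
    | succ n =>
      have hφ' : ContDiffAt 𝕜' n (deriv φ) (g x) := hφ.derivWithin (by norm_cast)
      have hg' : ContDiffAt 𝕜 n (deriv g) x := hg.derivWithin (by norm_cast)
      have hgn : ContDiffAt 𝕜 n g x := hg.of_le (by norm_cast; omega)
      have h_deriv : deriv (φ ∘ g) =ᶠ[𝓝 x] (deriv φ ∘ g) * deriv g :=
        deriv_comp_eventuallyEq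
          ((hφ.eventually (by simp)).mono fun _ h ↦ h.differentiableAt (by simp))
          ((hg.eventually (by simp)).mono fun _ h ↦ h.differentiableAt (by simp))
      have h_outer (k : ℕ) (hk : k ≤ n) : 0 ≤ iteratedDeriv k (deriv φ ∘ g) x := by
        have hkn : (k : WithTop ℕ∞) ≤ n := by exact_mod_cast hk
        refine ih k (by omega) (hφ'.of_le hkn) (hgn.of_le hkn) (fun i hi ↦ ?_)
          fun i hi hik ↦ hg_nonneg i hi (by omega)
        rw [← iteratedDeriv_succ']
        exact hφ_nonneg (i + 1) (by omega)
      have h_inner (k : ℕ) (hk : k ≤ n) : 0 ≤ iteratedDeriv k (deriv g) x := by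
        rw [← iteratedDeriv_succ']
        exact hg_nonneg (k + 1) (by omega) (by omega)
      rw [iteratedDeriv_succ', h_deriv.iteratedDeriv_eq]
      exact iteratedDeriv_mul_nonneg ((hφ'.restrict_scalars 𝕜).comp x hgn) hg' h_outer h_inner

end Nonneg

theorem rpow_abs_monotonic_general {f : ℝ → ℝ} {x q : ℝ} {n : ℕ} (hf : ContDiffAt ℝ n f x)
    (hfx : 0 < f x) (hlog : ∀ k, 1 ≤ k → k ≤ n → 0 ≤ iteratedDeriv k (fun y ↦ Real.log (f y)) x)
    (hq : 0 ≤ q) : 0 ≤ iteratedDeriv n (fun y ↦ f y ^ q) x := by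
  have h_exp : (fun y ↦ f y ^ q) =ᶠ[𝓝 x] Real.exp ∘ fun y ↦ q * Real.log (f y) := by
    filter_upwards [hf.continuousAt.eventually_const_lt hfx] with y hy
    simp only [Function.comp_apply, Real.rpow_def_of_pos hy, mul_comm]
  rw [h_exp.iteratedDeriv_eq]
  refine iteratedDeriv_comp_nonneg Real.contDiff_exp.contDiffAt
    (contDiffAt_const.mul (hf.log hfx.ne')) (fun k _ ↦ ?_) fun k hk hkn ↦ ?_
  · rw [iteratedDeriv_eq_iterate, Real.iter_deriv_exp]
    exact Real.exp_nonneg _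
  · rw [iteratedDeriv_const_mul_field]
    exact mul_nonneg hq (hlog k hk hkn)

theorem rpow_abs_monotonic (f : ℝ → ℝ)
    (hf : ContDiffAt ℝ (⊤ : ℕ∞) f 0) (hf0 : 0 < f 0)
    (hlog : ∀ k : ℕ, 0 ≤ iteratedDeriv k (fun x => Real.log (f x)) 0)
    (q : ℝ) (hq : 0 ≤ q) :
    ∀ k : ℕ, 0 ≤ iteratedDeriv k (fun x => f x ^ q) 0 := fun _ ↦
  rpow_abs_monotonic_general (hf.of_le (by exact_mod_cast le_top)) hf0 (fun i _ _ ↦ hlog i) hq
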